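/- Let I be a monomial ideal in S = K[x₁,…,xₙ]. Then every synor resolution (F_*, δ_*) of S/I is a minimal multigraded free resolution of S/I: the sequence F_* is exact in homological degrees ≥ 1, the cokernel of δ₁ : F₁ → F₀ ≅ S is S/I, and δ_i(F_i) ⊆ (x₁,…,xₙ)F_{i−1} for all i ≥ 1. -/

import Mathlib

open Finsupp

set_option synthInstance.maxHeartbeats 1000000
set_option maxHeartbeats 1000000

noncomputable section

variable (K : Type) [Field K]

section Core
variable (P : Type) [Preorder P]

/-- Order chains with `n` elements of the poset `P`, written as strictly
decreasing tuples `(x₀ > x₁ > ⋯ > x_{n-1})`. -/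
def OChain (n : ℕ) : Type := {c : Fin n → P // StrictAnti c}

/-- The chain group in "level" `n`: the `K`-vector space with basis the order chains with
`n` elements.  Level `n` corresponds to homological degree `n - 1`; in particular
`CGrp K P 0 ≅ K` is the reduced part `C̃₋₁`. -/
abbrev CGrp (n : ℕ) : Type := OChain P n →₀ K

/-- Deletion of the `k`-th entry of an order chain. -/
def odel {n : ℕ} (k : Fin (n + 1)) (c : OChain P (n + 1)) : OChain P n :=
  ⟨c.1 ∘ k.succAbove, c.2.comp_strictMono (Fin.strictMono_succAbove k)⟩

/-- The simplicial boundary map (of the reduced simplicial chain complex of the order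
complex), from level `n+1` to level `n`. -/
def cbdry (n : ℕ) : CGrp K P (n + 1) →ₗ[K] CGrp K P n :=
  Finsupp.lsum K fun c => ∑ k : Fin (n + 1), ((-1 : K) ^ (k : ℕ)) • Finsupp.lsingle (odel P k c)

/-- The cycles in level `n` (every level-0 chain, i.e. multiple of the empty chain,
is a cycle). -/
def cyclesAt : (n : ℕ) → Submodule K (CGrp K P n)
  | 0 => ⊤
  | (n + 1) => LinearMap.ker (cbdry K P n)

/-- The boundaries in level `n`. -/
def boundariesIn (n : ℕ) : Submodule K (CGrp K P n) :=
  LinearMap.range (cbdry K P n)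

/-- `H̃_{n-1}(P) ≠ 0`: nontriviality of the reduced simplicial homology (with coefficients
in `K`) of the order complex of `P` in degree `n - 1` (level `n`). -/
def RHomNontrivial (n : ℕ) : Prop := ¬ cyclesAt K P n ≤ boundariesIn K P n

/-- The subspace of chains all of whose elements lie in the subset `J ⊆ P`
(the chain group of the subposet `J`). -/
def chainsIn (J : Set P) (n : ℕ) : Submodule K (CGrp K P n) :=
  Finsupp.supported K K {c : OChain P n | ∀ r, c.1 r ∈ J}

/-- Transport of chain groups along an equality of levels. -/
def castCGrp {a b : ℕ} (h : a = b) : CGrp K P a ≃ₗ[K] CGrp K P b :=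
  Finsupp.domLCongr (Equiv.cast (congrArg (OChain P) h))

end Core


section Synor
variable (P : Type) [PartialOrder P]

/-- For a family `S` of graded pieces (with `S n x` the piece of homological degree `n`,
i.e. level `n+1`, sitting over `x ∈ P`) and a subset `J ⊆ P`, the part of the complex
lying over `J`: at level `0` it is all of `C̃₋₁ = K`, and at level `n+1` it is
`⊕_{x ∈ J} S_n^{(x)}`. -/
def idealPart (S : (n : ℕ) → P → Submodule K (CGrp K P (n + 1))) (J : Set P) :
    (nn : ℕ) → Submodule K (CGrp K P nn)
  | 0 => ⊤
  | (n + 1) => ⨆ x ∈ J, S n x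

/-- A synor complex for the finite poset `P`: a strictly `P`-graded subcomplex
`S_*(P) ⊆ C̃_*(P)` of the reduced simplicial chain complex of the order complex of `P`
(we identify the injective `P`-graded chain map `φ` with the inclusion of its image) with:
`S_i(P) = ⊕_{x ∈ P} S_i(P)^{(x)}` with `S_i(P)^{(x)}` contained in the span of the order
chains with largest element `x` (`graded`); `∂(S_i(P)^{(x)}) ⊆ ⊕_{y<x} S_{i-1}(P)^{(y)}`
(`strict`; for degree `0` the boundary lands in `C̃₋₁ = K` automatically); (S1)
`dim_K S_i(P)^{(x)} = dim_K H̃_{i-1}(P_{<x})` (`dim_eq`, the dimension of the reduced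
homology being the dimension of the cycles minus the dimension of the boundaries); and
(S2) for every order ideal `J ⊆ P` the inclusion `S_*(P)^J ⊆ C̃_*(J)` induces an
isomorphism on homology (`quasiIso`: surjectivity and injectivity of the induced map). -/
structure SynorComplex : Type where
  S : (n : ℕ) → P → Submodule K (CGrp K P (n + 1))
  graded : ∀ (n : ℕ) (x : P),
    S n x ≤ Finsupp.supported K K {c : OChain P (n + 1) | c.1 0 = x}
  strict : ∀ (n : ℕ) (x : P), ∀ f ∈ S (n + 1) x,
    cbdry K P (n + 1) f ∈ ⨆ y ∈ Set.Iio x, S n y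
  dim_eq : ∀ (n : ℕ) (x : P),
    Module.finrank K ↥(S n x) =
      Module.finrank K ↥(cyclesAt K {y : P // y < x} n) -
        Module.finrank K ↥(boundariesIn K {y : P // y < x} n)
  quasiIso : ∀ J : Set P, IsLowerSet J → ∀ nn : ℕ,
    (∀ z ∈ cyclesAt K P nn ⊓ chainsIn K P J nn,
        ∃ a ∈ cyclesAt K P nn ⊓ idealPart K P S J nn,
          z - a ∈ Submodule.map (cbdry K P nn) (chainsIn K P J (nn + 1))) ∧
    (∀ a ∈ idealPart K P S J nn,
        a ∈ Submodule.map (cbdry K P nn) (chainsIn K P J (nn + 1)) →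
        a ∈ Submodule.map (cbdry K P nn) (idealPart K P S J (nn + 1)))

end Synor

section Monomial

variable (nv : ℕ)

/-- The polynomial ring `S = K[x₁, …, xₙ]`. -/
abbrev PolyS : Type := MvPolynomial (Fin nv) K

/-- The monomial `x^d` attached to an exponent vector `d`. -/
def monOf (d : Fin nv → ℕ) : PolyS K nv :=
  MvPolynomial.monomial (Finsupp.equivFunOnFinite.symm d) 1

/-- `I` is a monomial ideal: it is generated by monomials. -/
def IsMonomialIdeal (I : Ideal (PolyS K nv)) : Prop :=
  ∃ G : Set (Fin nv → ℕ), I = Ideal.span (monOf K nv '' G)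

/-- The minimal monomial generating set `G(I)` of a monomial ideal: exponent vectors of
the monomials of `I` that are minimal with respect to divisibility. -/
def minGens (I : Ideal (PolyS K nv)) : Set (Fin nv → ℕ) :=
  {d | monOf K nv d ∈ I ∧ ∀ d' < d, monOf K nv d' ∉ I}

/-- The underlying set of the LCM-lattice of a monomial ideal: all least common multiples
(= pointwise suprema of exponent vectors) of subsets of the minimal generators, ordered by
divisibility (= the pointwise order).  The empty subset contributes `lcm ∅ = 1`, i.e. the
zero exponent vector. -/
def lcmSet (I : Ideal (PolyS K nv)) : Set (Fin nv → ℕ) :=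
  {m | ∃ B : Finset (Fin nv → ℕ), ↑B ⊆ minGens K nv I ∧ m = B.sup id}

/-- The open interval `(1, m)` in the LCM-lattice of `I`. -/
def openInt (I : Ideal (PolyS K nv)) (m : Fin nv → ℕ) : Set (Fin nv → ℕ) :=
  {p | p ∈ lcmSet K nv I ∧ 0 < p ∧ p < m}

/-- Total degree of a monomial given by its exponent vector. -/
def degTot (m : Fin nv → ℕ) : ℕ := ∑ r, m r

end Monomial

section More
variable (P : Type) [PartialOrder P]

open Classical in
/-- The projection of a chain onto its graded component of chains with largest element
`x`. -/
def projTop (x : P) (n : ℕ) : CGrp K P (n + 1) →ₗ[K] CGrp K P (n + 1) :=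
  Finsupp.lsum K fun c => if c.1 0 = x then Finsupp.lsingle c else 0

/-- The empty order chain. -/
def emptyOC : OChain P 0 := ⟨fun r => r.elim0, fun a => a.elim0⟩

end More

/-- `L̄ = lcm(I) ∖ {1}`: the LCM-lattice of `I` with its bottom element (the monomial `1`,
i.e. the zero exponent vector) removed, as a poset under divisibility. -/
def lcmBar (nv : ℕ) (I : Ideal (PolyS K nv)) : Set (Fin nv → ℕ) :=
  {m | m ∈ lcmSet K nv I ∧ m ≠ 0}

open TensorProduct

section OrderComplex
variable {P : Type}

@[simp]
lemma cbdry_single [Preorder P] (n : ℕ) (c : OChain P (n + 1)) (r : K) :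
    cbdry K P n (single c r) =
      ∑ k : Fin (n + 1), ((-1 : K) ^ (k : ℕ)) • single (odel P k c) r := by
  simp [cbdry]

/-- The simplicial boundary squares to zero. -/
lemma cbdry_cbdry [Preorder P] (n : ℕ) (z : CGrp K P (n + 2)) :
    cbdry K P n (cbdry K P (n + 1) z) = 0 := by
  induction z using Finsupp.induction_linear with
  | zero => simp
  | add f g hf hg => rw [map_add, map_add, hf, hg, add_zero]
  | single c r =>
    simp only [cbdry_single, map_sum, map_smul, Finset.smul_sum, smul_smul, ← pow_add]
    rw [← Fintype.sum_prod_type']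
    refine Finset.sum_involution (fun x _ => (x.1.succAbove x.2, x.2.predAbove x.1)) ?_ ?_
      (fun _ _ => Finset.mem_univ _) ?_
    · rintro ⟨i, j⟩ -
      have hdel : odel P (j.predAbove i) (odel P (i.succAbove j) c) = odel P j (odel P i c) := by
        apply Subtype.ext
        funext k
        simp only [odel, Function.comp_apply]
        rw [Fin.succAbove_succAbove_succAbove_predAbove]
      simp only [hdel]
      rw [Fin.neg_one_pow_succAbove_add_predAbove, neg_smul, add_neg_cancel]
    · rintro ⟨i, j⟩ - - h
      exact Fin.succAbove_ne i j (congrArg Prod.fst h)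
    · rintro ⟨i, j⟩ -
      simp [Fin.succAbove_succAbove_predAbove, Fin.predAbove_predAbove_succAbove]

/-- The order chain obtained by prepending an element `t` above all elements of `c`. -/
def OChain.cons [Preorder P] {n : ℕ} (t : P) (c : OChain P n) (h : ∀ j, c.1 j < t) :
    OChain P (n + 1) :=
  ⟨Fin.cons t c.1, (Fin.liftFun_cons (· > ·)).2 ⟨h, c.2⟩⟩

lemma odel_zero_cons [Preorder P] {n : ℕ} {t : P} {c : OChain P n} (h : ∀ j, c.1 j < t) :
    odel P 0 (c.cons t h) = c :=
  Subtype.ext (funext fun _ => by simp [odel, OChain.cons])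

lemma odel_succ_cons [Preorder P] {n : ℕ} {t : P} {c : OChain P (n + 1)} (h : ∀ j, c.1 j < t)
    (k : Fin (n + 1)) :
    odel P k.succ (c.cons t h) = (odel P k c).cons t fun _ => h _ := by
  refine Subtype.ext (funext fun j => ?_)
  refine Fin.cases ?_ (fun j => ?_) j <;> simp [odel, OChain.cons, Fin.removeNth]

lemma odel_zero_lt [Preorder P] {n : ℕ} (c : OChain P (n + 1)) (j : Fin n) :
    (odel P 0 c).1 j < c.1 0 :=
  c.2 (by simp)

lemma cons_odel_zero [Preorder P] {n : ℕ} (c : OChain P (n + 1)) :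
    (odel P 0 c).cons (c.1 0) (odel_zero_lt c) = c := by
  refine Subtype.ext (funext fun j => ?_)
  refine Fin.cases ?_ (fun j => ?_) j <;> simp [odel, OChain.cons]

open Classical in
/-- The cone operator with apex `t`: prepend `t` to an order chain whenever this is again an
order chain. -/
def coneOp [Preorder P] (t : P) (n : ℕ) : CGrp K P n →ₗ[K] CGrp K P (n + 1) :=
  Finsupp.lsum K fun c => if h : ∀ j, c.1 j < t then Finsupp.lsingle (c.cons t h) else 0

lemma coneOp_single_of_lt [Preorder P] {t : P} {n : ℕ} {c : OChain P n}
    (h : ∀ j, c.1 j < t) (r : K) :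
    coneOp K t n (single c r) = single (c.cons t h) r := by
  rw [coneOp, Finsupp.lsum_single, dif_pos h, Finsupp.lsingle_apply]

lemma coneOp_single_of_not_lt [Preorder P] {t : P} {n : ℕ} {c : OChain P n}
    (h : ¬ ∀ j, c.1 j < t) (r : K) : coneOp K t n (single c r) = 0 := by
  rw [coneOp, Finsupp.lsum_single, dif_neg h, LinearMap.zero_apply]

lemma coneOp_mem_chainsIn [Preorder P] {t : P} {J : Set P} (ht : t ∈ J) {n : ℕ}
    {z : CGrp K P n} (hz : z ∈ chainsIn K P J n) : coneOp K t n z ∈ chainsIn K P J (n + 1) := by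
  rw [chainsIn, Finsupp.supported_eq_span_single] at hz
  induction hz using Submodule.span_induction with
  | zero => simp
  | add x y _ _ hx hy => rw [map_add]; exact add_mem hx hy
  | smul r x _ hx => rw [map_smul]; exact Submodule.smul_mem _ _ hx
  | mem x hx =>
    obtain ⟨c, hc, rfl⟩ := hx
    by_cases h : ∀ j, c.1 j < t
    · rw [coneOp_single_of_lt K h]
      exact Finsupp.single_mem_supported K _ (Fin.cases ht hc)
    · rw [coneOp_single_of_not_lt K h]
      exact zero_mem _

lemma cbdry_coneOp_zero [Preorder P] (t : P) (z : CGrp K P 0) :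
    cbdry K P 0 (coneOp K t 0 z) = z := by
  induction z using Finsupp.induction_linear with
  | zero => simp
  | add f g hf hg => rw [map_add, map_add, hf, hg]
  | single c r =>
    rw [coneOp_single_of_lt K (fun j => j.elim0), cbdry_single]
    simp [odel_zero_cons]

/-- Over a subset bounded above by `t`, the cone operator is a contracting homotopy. -/
lemma cbdry_coneOp_succ [PartialOrder P] {t : P} {J : Set P} (ht : t ∈ upperBounds J) {n : ℕ}
    {z : CGrp K P (n + 1)} (hz : z ∈ chainsIn K P J (n + 1)) :
    cbdry K P (n + 1) (coneOp K t (n + 1) z) + coneOp K t n (cbdry K P n z) = z := by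
  rw [chainsIn, Finsupp.supported_eq_span_single] at hz
  induction hz using Submodule.span_induction with
  | zero => simp
  | add x y _ _ hx hy => simp only [map_add]; rw [add_add_add_comm, hx, hy]
  | smul r x _ hx => simp only [map_smul]; rw [← smul_add, hx]
  | mem x hx =>
    obtain ⟨c, hc, rfl⟩ := hx
    by_cases h : ∀ j, c.1 j < t
    · have hdel (k : Fin (n + 1)) (j) : (odel P k c).1 j < t := h _
      simp only [coneOp_single_of_lt K h, cbdry_single, Fin.sum_univ_succ (n := n + 1), map_sum,
        odel_zero_cons, odel_succ_cons, map_smul, coneOp_single_of_lt K (hdel _)]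
      rw [add_assoc, ← Finset.sum_add_distrib]
      simp [pow_succ]
    · obtain rfl : c.1 0 = t := by
        by_contra hne
        exact h fun j => (c.2.antitone (Fin.zero_le j)).trans_lt
          (lt_of_le_of_ne (ht (hc 0)) hne)
      rw [coneOp_single_of_not_lt K h, map_zero, zero_add, cbdry_single, map_sum,
        Fin.sum_univ_succ, Finset.sum_eq_zero, add_zero, map_smul,
        coneOp_single_of_lt K (odel_zero_lt c), cons_odel_zero]
      · simp
      · intro k _
        rw [map_smul, coneOp_single_of_not_lt, smul_zero]
        intro hk
        cases n with
        | zero => exact k.elim0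
        | succ n => simpa [odel] using hk 0

/-- The reduced chain complex of a subposet with a greatest element is acyclic. -/
lemma cyclesAt_inf_chainsIn_le [PartialOrder P] {t : P} {J : Set P} (ht : IsGreatest J t)
    (n : ℕ) :
    cyclesAt K P n ⊓ chainsIn K P J n ≤
      Submodule.map (cbdry K P n) (chainsIn K P J (n + 1)) := by
  rintro z ⟨hz, hzJ⟩
  refine ⟨coneOp K t n z, coneOp_mem_chainsIn K ht.1 hzJ, ?_⟩
  cases n with
  | zero => exact cbdry_coneOp_zero K t z
  | succ n =>
    have := cbdry_coneOp_succ K ht.2 hzJ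
    rwa [LinearMap.mem_ker.1 hz, map_zero, add_zero] at this

end OrderComplex

section MultigradedComponents
variable {nv : ℕ} {P : Type} [DecidableEq P] {V : Type} [AddCommGroup V] [Module K V]
  (e : P → Fin nv →₀ ℕ) (S : P → Submodule K V)

/-- The map `S ⊗ W → V`, `f ⊗ z ↦ [x^a] (x^d f) • z`: the component of multidegree `a` of
`S(-d) ⊗ W`. -/
def shiftedCoeff (d a : Fin nv →₀ ℕ) (W : Submodule K V) : PolyS K nv ⊗[K] W →ₗ[K] V :=
  TensorProduct.lift <| (LinearMap.lsmul K V : K →ₗ[K] V →ₗ[K] V).compl₁₂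
    (MvPolynomial.lcoeff K a ∘ₗ LinearMap.mulLeft K (MvPolynomial.monomial d (1 : K))) W.subtype

@[simp]
lemma shiftedCoeff_tmul (d a : Fin nv →₀ ℕ) (W : Submodule K V) (f : PolyS K nv) (z : W) :
    shiftedCoeff K d a W (f ⊗ₜ z) =
      MvPolynomial.coeff a (MvPolynomial.monomial d (1 : K) * f) • (z : V) :=
  rfl

lemma eq_zero_of_shiftedCoeff_eq_zero (d : Fin nv →₀ ℕ) (W : Submodule K V)
    {x : PolyS K nv ⊗[K] W} (h : ∀ a, shiftedCoeff K d a W x = 0) : x = 0 := by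
  let b := MvPolynomial.basisMonomials (Fin nv) K
  have key (y : PolyS K nv ⊗[K] W) (m : Fin nv →₀ ℕ) :
      (TensorProduct.equivFinsuppOfBasisLeft b y m : V) = shiftedCoeff K d (d + m) W y := by
    induction y using TensorProduct.induction_on with
    | zero => simp
    | add x y hx hy =>
      rw [map_add, map_add, Finsupp.add_apply, Submodule.coe_add, hx, hy]
    | tmul f z =>
      rw [shiftedCoeff_tmul, MvPolynomial.coeff_monomial_mul, one_mul,
        TensorProduct.equivFinsuppOfBasisLeft_apply_tmul_apply]
      rfl
  apply (TensorProduct.equivFinsuppOfBasisLeft b).injective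
  ext m
  rw [key, h, map_zero, Finsupp.zero_apply, ZeroMemClass.coe_zero]

/-- The component of multidegree `a` of `⊕ₚ S(-e p) ⊗ S p`, mapped to the ambient space of the
`S p`. -/
def multidegreePart (a : Fin nv →₀ ℕ) :
    (DirectSum P fun p => PolyS K nv ⊗[K] S p) →ₗ[K] V :=
  DirectSum.toModule K P V fun p => shiftedCoeff K (e p) a (S p)

lemma multidegreePart_lof (a : Fin nv →₀ ℕ) (p : P) (x : PolyS K nv ⊗[K] S p) :
    multidegreePart K e S a
      (DirectSum.lof (PolyS K nv) P (fun p => PolyS K nv ⊗[K] S p) p x) =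
      shiftedCoeff K (e p) a (S p) x := by
  rw [DirectSum.lof_eq_of, ← DirectSum.lof_eq_of K]
  exact DirectSum.toModule_lof (M := fun p => PolyS K nv ⊗[K] S p) K p x

variable {S} in
lemma directSum_tensor_induction
    {motive : (DirectSum P fun p => PolyS K nv ⊗[K] S p) → Prop}
    (zero : motive 0) (add : ∀ x y, motive x → motive y → motive (x + y))
    (lof : ∀ p (d : Fin nv →₀ ℕ) (c : K) (z : S p),
      motive (DirectSum.lof (PolyS K nv) P (fun p => PolyS K nv ⊗[K] S p) p
        (MvPolynomial.monomial d c ⊗ₜ z)))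
    (w : DirectSum P fun p => PolyS K nv ⊗[K] S p) : motive w := by
  induction w using DirectSum.induction_on with
  | zero => exact zero
  | add x y hx hy => exact add x y hx hy
  | of p x =>
    rw [← DirectSum.lof_eq_of (PolyS K nv)]
    induction x using TensorProduct.induction_on with
    | zero => rw [map_zero]; exact zero
    | add x y hx hy => rw [map_add]; exact add _ _ hx hy
    | tmul f z =>
      induction f using MvPolynomial.induction_on' with
      | monomial d c => exact lof p d c z
      | add f g hf hg => rw [TensorProduct.add_tmul, map_add]; exact add _ _ hf hg

lemma multidegreePart_lof_monomial (a : Fin nv →₀ ℕ) (p : P) (d : Fin nv →₀ ℕ) (c : K)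
    (z : S p) :
    multidegreePart K e S a (DirectSum.lof (PolyS K nv) P (fun p => PolyS K nv ⊗[K] S p) p
      (MvPolynomial.monomial d c ⊗ₜ z)) = if e p + d = a then c • (z : V) else 0 := by
  classical
  rw [multidegreePart_lof, shiftedCoeff_tmul, MvPolynomial.monomial_mul, one_mul,
    MvPolynomial.coeff_monomial, ite_smul, zero_smul]

lemma multidegreePart_mem (a : Fin nv →₀ ℕ) (w : DirectSum P fun p => PolyS K nv ⊗[K] S p) :
    multidegreePart K e S a w ∈ ⨆ p ∈ {p | e p ≤ a}, S p := by
  induction w using directSum_tensor_induction with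
  | zero => simp
  | add x y hx hy => rw [map_add]; exact add_mem hx hy
  | lof p d c z =>
    rw [multidegreePart_lof_monomial]
    split_ifs with h
    · have hp : p ∈ {p | e p ≤ a} := by rw [Set.mem_ofPred_eq, ← h]; exact le_self_add
      exact Submodule.smul_mem _ _ (le_biSup S hp z.2)
    · exact zero_mem _

lemma finite_setOf_multidegreePart_ne_zero (w : DirectSum P fun p => PolyS K nv ⊗[K] S p) :
    {a | multidegreePart K e S a w ≠ 0}.Finite := by
  induction w using directSum_tensor_induction with
  | zero => simp
  | add x y hx hy =>
    refine (hx.union hy).subset fun a ha => ?_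
    by_contra! h
    simp_all
  | lof p d c z =>
    refine (Set.finite_singleton (e p + d)).subset fun a ha => ?_
    by_contra h
    exact ha (by rw [multidegreePart_lof_monomial, if_neg (Ne.symm h)])

/-- Every vector in the sum of the `S p` with `e p ≤ a` is the component of multidegree `a` of a
homogeneous element. -/
lemma exists_multidegreePart_eq {a : Fin nv →₀ ℕ} {b : V}
    (hb : b ∈ ⨆ p ∈ {p | e p ≤ a}, S p) :
    ∃ u : DirectSum P fun p => PolyS K nv ⊗[K] S p,
      ∀ a', multidegreePart K e S a' u = if a = a' then b else 0 := by
  induction hb using Submodule.iSup_induction' with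
  | zero => exact ⟨0, by simp⟩
  | add x y _ _ hx hy =>
    obtain ⟨u, hu⟩ := hx
    obtain ⟨v, hv⟩ := hy
    refine ⟨u + v, fun a' => ?_⟩
    rw [map_add, hu, hv]
    split_ifs <;> simp
  | mem p x hx =>
    by_cases hp : e p ≤ a
    · have hxp : x ∈ S p := by simpa [hp] using hx
      refine ⟨DirectSum.lof (PolyS K nv) P (fun p => PolyS K nv ⊗[K] S p) p
        (MvPolynomial.monomial (a - e p) 1 ⊗ₜ ⟨x, hxp⟩), fun a' => ?_⟩
      rw [multidegreePart_lof_monomial, add_tsub_cancel_of_le hp, one_smul]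
    · have hx0 : x = 0 := by simpa [hp] using hx
      exact ⟨0, by simp [hx0]⟩

lemma eq_zero_of_multidegreePart_eq_zero (π : P → V →ₗ[K] V)
    (hπ : ∀ p q, ∀ z ∈ S q, π p z = if q = p then z else 0)
    {w : DirectSum P fun p => PolyS K nv ⊗[K] S p}
    (hw : ∀ a, multidegreePart K e S a w = 0) : w = 0 := by
  have key (p : P) (a : Fin nv →₀ ℕ) (w : DirectSum P fun p => PolyS K nv ⊗[K] S p) :
      π p (multidegreePart K e S a w) = shiftedCoeff K (e p) a (S p) (w p) := by
    induction w using directSum_tensor_induction with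
    | zero => simp
    | add x y hx hy => rw [map_add, map_add, hx, hy, DirectSum.add_apply, map_add]
    | lof q d c z =>
      rw [multidegreePart_lof, shiftedCoeff_tmul, map_smul, hπ p q z z.2]
      split_ifs with h
      · subst h
        rw [DirectSum.lof_apply, shiftedCoeff_tmul]
      · rw [DirectSum.lof_eq_of, DirectSum.of_eq_of_ne _ _ _ (Ne.symm h), map_zero, smul_zero]
  refine DFinsupp.ext fun p => ?_
  refine eq_zero_of_shiftedCoeff_eq_zero K (e p) (S p) fun a => ?_
  rw [← key, hw, map_zero]

/-- A criterion for exactness of a sequence of multigraded modules in terms of the components of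
each multidegree. -/
lemma range_eq_ker_of_multidegreePart {V' V'' N : Type} [AddCommGroup V'] [Module K V']
    [AddCommGroup V''] [Module K V''] [AddCommGroup N] [Module (PolyS K nv) N]
    (S' : P → Submodule K V') (π : P → V →ₗ[K] V)
    (hπ : ∀ p q, ∀ z ∈ S q, π p z = if q = p then z else 0)
    (κ : (Fin nv →₀ ℕ) → N → V'') (hκ : ∀ x, x = 0 ↔ ∀ a, κ a x = 0)
    (D' : (DirectSum P fun p => PolyS K nv ⊗[K] S' p) →ₗ[PolyS K nv]
      DirectSum P fun p => PolyS K nv ⊗[K] S p)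
    (D : (DirectSum P fun p => PolyS K nv ⊗[K] S p) →ₗ[PolyS K nv] N)
    (d' : V' →ₗ[K] V) (d : V →ₗ[K] V'')
    (hD' : ∀ a w, multidegreePart K e S a (D' w) = d' (multidegreePart K e S' a w))
    (hD : ∀ a w, κ a (D w) = d (multidegreePart K e S a w))
    (hdd : ∀ v, d (d' v) = 0)
    (hex : ∀ a, ∀ b ∈ ⨆ p ∈ {p | e p ≤ a}, S p, d b = 0 →
      ∃ b' ∈ ⨆ p ∈ {p | e p ≤ a}, S' p, d' b' = b) :
    LinearMap.range D' = LinearMap.ker D := by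
  apply le_antisymm
  · rintro _ ⟨w, rfl⟩
    rw [LinearMap.mem_ker, hκ]
    intro a
    rw [hD, hD', hdd]
  · intro w hw
    have hw0 := (hκ (D w)).1 hw
    choose b hb hdb using fun a => hex a _ (multidegreePart_mem K e S a w) (by rw [← hD, hw0])
    choose u hu using fun a => exists_multidegreePart_eq K e S' (hb a)
    have hfin := finite_setOf_multidegreePart_ne_zero K e S w
    refine ⟨∑ a ∈ hfin.toFinset, u a, ?_⟩
    rw [← sub_eq_zero]
    refine eq_zero_of_multidegreePart_eq_zero K e S π hπ fun a => ?_
    rw [map_sub, hD', map_sum]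
    simp only [hu, Finset.sum_ite_eq']
    split_ifs with ha
    · rw [hdb, sub_self]
    · rw [map_zero, zero_sub, neg_eq_zero]
      simpa using ha

end MultigradedComponents

section SynorAcyclic
variable {P : Type} [PartialOrder P]

lemma projTop_apply (x : P) (n : ℕ) (z : CGrp K P (n + 1)) (c : OChain P (n + 1))
    [Decidable (c.1 0 = x)] :
    projTop K P x n z c = if c.1 0 = x then z c else 0 := by
  classical
  induction z using Finsupp.induction_linear with
  | zero => simp
  | add f g hf hg =>
    rw [map_add, Finsupp.add_apply, Finsupp.add_apply, hf, hg]
    split_ifs <;> simp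
  | single b r =>
    rw [projTop, Finsupp.lsum_single, apply_ite (fun φ : K →ₗ[K] CGrp K P (n + 1) => φ r),
      Finsupp.lsingle_apply, LinearMap.zero_apply]
    by_cases hbc : b = c
    · subst hbc
      split_ifs <;> simp
    · split_ifs <;> simp [Finsupp.single_eq_of_ne' hbc]

lemma projTop_of_mem_supported [DecidableEq P] {n : ℕ} (x y : P) {z : CGrp K P (n + 1)}
    (hz : z ∈ Finsupp.supported K K {c : OChain P (n + 1) | c.1 0 = y}) :
    projTop K P x n z = if y = x then z else 0 := by
  ext c
  rw [projTop_apply]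
  by_cases hc : z c = 0
  · split_ifs <;> simp [hc]
  · obtain rfl : c.1 0 = y := (Finsupp.mem_supported K z).1 hz (Finsupp.mem_support_iff.2 hc)
    split_ifs <;> simp

lemma projTop_eq_zero {n : ℕ} {x : P} {z : CGrp K P (n + 1)}
    (hz : ∀ c, z c ≠ 0 → c.1 0 ≠ x) : projTop K P x n z = 0 := by
  classical
  ext c
  rw [projTop_apply]
  split_ifs with h
  · by_contra hc
    exact hz c hc h
  · rfl

lemma sum_projTop {n : ℕ} (z : CGrp K P (n + 1)) (T : Finset P)
    (hT : ∀ c, z c ≠ 0 → c.1 0 ∈ T) : ∑ x ∈ T, projTop K P x n z = z := by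
  classical
  ext c
  rw [Finsupp.finsetSum_apply]
  simp only [projTop_apply, Finset.sum_ite_eq]
  split_ifs with h
  · rfl
  · by_contra hc
    exact h (hT c (Ne.symm hc))

lemma eq_emptyOC (c : OChain P 0) : c = emptyOC P :=
  Subtype.ext (funext fun r => r.elim0)

lemma SynorComplex.iSup_le_supported (σ : SynorComplex K P) (n : ℕ) (J : Set P) :
    ⨆ x ∈ J, σ.S n x ≤ Finsupp.supported K K {c : OChain P (n + 1) | c.1 0 ∈ J} :=
  iSup₂_le fun x hx => (σ.graded n x).trans <|
    Finsupp.supported_mono fun c (hc : c.1 0 = x) => show c.1 0 ∈ J from hc ▸ hx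

lemma SynorComplex.idealPart_le_chainsIn (σ : SynorComplex K P) {J : Set P} (hJ : IsLowerSet J)
    (n : ℕ) : idealPart K P σ.S J n ≤ chainsIn K P J n := by
  cases n with
  | zero =>
    intro z _
    exact (Finsupp.mem_supported K z).2 fun c _ r => r.elim0
  | succ n =>
    exact (σ.iSup_le_supported K n J).trans <| Finsupp.supported_mono fun c hc r =>
      hJ (c.2.antitone (Fin.zero_le r)) hc

/-- The part of a synor complex over an order ideal with a greatest element is acyclic. -/
lemma SynorComplex.exists_cbdry_eq (σ : SynorComplex K P) {J : Set P} (hJ : IsLowerSet J) {t : P}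
    (ht : IsGreatest J t) {n : ℕ} {z : CGrp K P n} (hz : z ∈ idealPart K P σ.S J n)
    (hcyc : z ∈ cyclesAt K P n) : ∃ b ∈ ⨆ x ∈ J, σ.S n x, cbdry K P n b = z :=
  (σ.quasiIso J hJ n).2 z hz <|
    cyclesAt_inf_chainsIn_le K ht n ⟨hcyc, σ.idealPart_le_chainsIn K hJ n hz⟩

lemma SynorComplex.exists_cbdry_succ_eq (σ : SynorComplex K P) {J : Set P} (hJ : IsLowerSet J)
    (ht : J.Nonempty → ∃ t, IsGreatest J t) (n : ℕ) (z : CGrp K P (n + 1))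
    (hz : z ∈ ⨆ x ∈ J, σ.S n x) (hcyc : cbdry K P n z = 0) :
    ∃ b ∈ ⨆ x ∈ J, σ.S (n + 1) x, cbdry K P (n + 1) b = z := by
  obtain rfl | hne := J.eq_empty_or_nonempty
  · have hz0 : z = 0 := by simpa using hz
    exact ⟨0, zero_mem _, by rw [map_zero, hz0]⟩
  · obtain ⟨t, ht⟩ := ht hne
    exact σ.exists_cbdry_eq K hJ ht (n := n + 1) hz hcyc

end SynorAcyclic

section LcmLattice
variable {nv : ℕ} {I : Ideal (PolyS K nv)}

lemma monOf_mem_of_le {d d' : Fin nv → ℕ} (hd : monOf K nv d ∈ I) (h : d ≤ d') :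
    monOf K nv d' ∈ I := by
  refine I.mem_of_dvd ?_ hd
  exact MvPolynomial.monomial_dvd_monomial.2 ⟨Or.inr h, one_dvd _⟩

lemma exists_minGens_le {d : Fin nv → ℕ} (hd : monOf K nv d ∈ I) :
    ∃ g ∈ minGens K nv I, g ≤ d := by
  obtain ⟨g, hgd, hg⟩ := exists_minimal_le_of_wellFoundedLT (fun d => monOf K nv d ∈ I) d hd
  exact ⟨g, ⟨hg.prop, fun d' hd' h => hg.not_lt h hd'⟩, hgd⟩

lemma monOf_mem_of_mem_lcmBar {p : Fin nv → ℕ} (hp : p ∈ lcmBar K nv I) : monOf K nv p ∈ I := by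
  obtain ⟨⟨B, hB, rfl⟩, h0⟩ := hp
  obtain ⟨g, hg⟩ : B.Nonempty := by
    rw [Finset.nonempty_iff_ne_empty]
    rintro rfl
    exact h0 rfl
  exact monOf_mem_of_le K (hB hg).1 (Finset.le_sup (f := id) hg)

lemma ne_zero_of_mem_minGens (hI : I ≠ ⊤) {g : Fin nv → ℕ} (hg : g ∈ minGens K nv I) :
    g ≠ 0 := by
  rintro rfl
  refine hI ((Ideal.eq_top_iff_one I).2 ?_)
  have h0 : Finsupp.equivFunOnFinite.symm (0 : Fin nv → ℕ) = 0 := Finsupp.ext fun _ => rfl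
  have h1 := hg.1
  rwa [monOf, h0] at h1

lemma minGens_subset_lcmBar (hI : I ≠ ⊤) : minGens K nv I ⊆ lcmBar K nv I := fun g hg =>
  ⟨⟨{g}, by simpa using hg, by simp⟩, ne_zero_of_mem_minGens K hI hg⟩

/-- The monomials of `lcm(I) ∖ {1}` that divide a fixed monomial have a greatest element as soon
as there are any. -/
lemma exists_isGreatest_lcmBar_le (a : Fin nv → ℕ)
    (hne : {p : lcmBar K nv I | p.1 ≤ a}.Nonempty) :
    ∃ t, IsGreatest {p : lcmBar K nv I | p.1 ≤ a} t := by
  have hfin : (minGens K nv I ∩ Set.Iic a).Finite := (Set.finite_Iic a).inter_of_right _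
  have hle (p : lcmBar K nv I) (hp : p.1 ≤ a) : p.1 ≤ hfin.toFinset.sup id := by
    obtain ⟨B, hB, hpB⟩ := p.2.1
    rw [hpB] at hp ⊢
    refine Finset.sup_mono fun g hg => ?_
    rw [Set.Finite.mem_toFinset]
    exact ⟨hB hg, (Finset.le_sup (f := id) hg).trans hp⟩
  obtain ⟨p, hp⟩ := hne
  refine ⟨⟨hfin.toFinset.sup id, ⟨hfin.toFinset, ?_, rfl⟩, fun h0 => ?_⟩, ?_, hle⟩
  · rw [Set.Finite.coe_toFinset]
    exact Set.inter_subset_left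
  · exact p.2.2 (le_antisymm (h0 ▸ hle p hp) bot_le)
  · exact Finset.sup_le (f := id) fun g hg => (hfin.mem_toFinset.1 hg).2

lemma monomial_mem_span_range_X {d : Fin nv →₀ ℕ} (hd : d ≠ 0) :
    MvPolynomial.monomial d (1 : K) ∈
      Ideal.span (Set.range (MvPolynomial.X : Fin nv → PolyS K nv)) := by
  obtain ⟨i, hi⟩ := Finsupp.ne_iff.1 hd
  refine Ideal.mem_of_dvd _ ?_ (Ideal.subset_span ⟨i, rfl⟩)
  refine MvPolynomial.monomial_dvd_monomial.2 ⟨Or.inr ?_, one_dvd _⟩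
  rw [Finsupp.single_le_iff]
  exact Nat.one_le_iff_ne_zero.2 hi

end LcmLattice

/-- Let `I` be a (proper) monomial ideal in `S = K[x₁,…,xₙ]` and fix a
synor complex `S_*(L̄)` for `L̄ = lcm(I) ∖ {1}`.  Every synor resolution `(F_*, δ_*)` of
`S/I` — the sequence of multigraded free `S`-modules
`F_i = ⊕_{m ∈ L̄} S_{i-1}(L̄)^{(m)} ⊗ S(-m)` (encoded here as `F_{i+1} = ⊕_{m} S ⊗_K
S_i(L̄)^{(m)}` together with `F₀ = S`), with differentials determined by
`δ_i(ζ ⊗ 1) = Σ_{m' < m} (m/m') · (ζ_{m'} ⊗ 1)` where `∂ζ = Σ_{m' < m} ζ_{m'}` is the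
strictly graded decomposition of the simplicial boundary (`ζ_{m'}` is the component of
`∂ζ` on chains with largest element `m'`) — is a minimal multigraded free resolution of
`S/I`: it is exact in homological degrees `≥ 1`, the cokernel of `δ₁ : F₁ → F₀ ≅ S` is
`S/I` (i.e. the image of `δ₁` is `I`), and `δ_i(F_i) ⊆ (x₁,…,xₙ)·F_{i-1}` for all
`i ≥ 1`. -/
theorem synor_resolution_minimal_free
    (nv : ℕ) (I : Ideal (PolyS K nv)) (hI : IsMonomialIdeal K nv I) (hItop : I ≠ ⊤)
    (σ : SynorComplex K ↥(lcmBar K nv I))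
    (hproj : ∀ (i : ℕ) (p : ↥(lcmBar K nv I)) (z : CGrp K ↥(lcmBar K nv I) (i + 2)),
      z ∈ σ.S (i + 1) p → ∀ q : ↥(lcmBar K nv I),
        projTop K ↥(lcmBar K nv I) q i (cbdry K ↥(lcmBar K nv I) (i + 1) z) ∈ σ.S i q)
    (δ : ∀ i : ℕ,
      (DirectSum ↥(lcmBar K nv I) fun p => PolyS K nv ⊗[K] ↥(σ.S (i + 1) p))
        →ₗ[PolyS K nv]
      (DirectSum ↥(lcmBar K nv I) fun p => PolyS K nv ⊗[K] ↥(σ.S i p)))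
    (δ0 : (DirectSum ↥(lcmBar K nv I) fun p => PolyS K nv ⊗[K] ↥(σ.S 0 p))
        →ₗ[PolyS K nv] PolyS K nv)
    (hδ0 : ∀ (p : ↥(lcmBar K nv I)) (z : CGrp K ↥(lcmBar K nv I) 1) (hz : z ∈ σ.S 0 p),
      δ0 (DirectSum.lof (PolyS K nv) ↥(lcmBar K nv I)
            (fun p => PolyS K nv ⊗[K] ↥(σ.S 0 p)) p
            ((1 : PolyS K nv) ⊗ₜ[K] (⟨z, hz⟩ : ↥(σ.S 0 p)))) =
        ((cbdry K ↥(lcmBar K nv I) 0 z) (emptyOC ↥(lcmBar K nv I))) •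
          MvPolynomial.monomial (Finsupp.equivFunOnFinite.symm p.1) (1 : K))
    (hδ : ∀ (i : ℕ) (p : ↥(lcmBar K nv I)) (z : CGrp K ↥(lcmBar K nv I) (i + 2))
        (hz : z ∈ σ.S (i + 1) p),
      δ i (DirectSum.lof (PolyS K nv) ↥(lcmBar K nv I)
            (fun p => PolyS K nv ⊗[K] ↥(σ.S (i + 1) p)) p
            ((1 : PolyS K nv) ⊗ₜ[K] (⟨z, hz⟩ : ↥(σ.S (i + 1) p)))) =
        ∑ᶠ q ∈ {q : ↥(lcmBar K nv I) | q.1 < p.1},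
          DirectSum.lof (PolyS K nv) ↥(lcmBar K nv I)
            (fun p => PolyS K nv ⊗[K] ↥(σ.S i p)) q
            ((MvPolynomial.monomial (Finsupp.equivFunOnFinite.symm (p.1 - q.1)) (1 : K)) ⊗ₜ[K]
              (⟨projTop K ↥(lcmBar K nv I) q i (cbdry K ↥(lcmBar K nv I) (i + 1) z),
                hproj i p z hz q⟩ : ↥(σ.S i q)))) :
    (∀ i : ℕ, LinearMap.range (δ (i + 1)) = LinearMap.ker (δ i)) ∧
    (LinearMap.range (δ 0) = LinearMap.ker δ0) ∧
    (LinearMap.range δ0 = I) ∧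
    (LinearMap.range δ0 ≤
      (Ideal.span (Set.range (MvPolynomial.X : Fin nv → PolyS K nv))) •
        (⊤ : Submodule (PolyS K nv) (PolyS K nv))) ∧
    (∀ i : ℕ, LinearMap.range (δ i) ≤
      (Ideal.span (Set.range (MvPolynomial.X : Fin nv → PolyS K nv))) •
        (⊤ : Submodule (PolyS K nv)
          (DirectSum ↥(lcmBar K nv I) fun p => PolyS K nv ⊗[K] ↥(σ.S i p)))) := by
  let e : lcmBar K nv I → Fin nv →₀ ℕ := fun p => Finsupp.equivFunOnFinite.symm p.1
  have he : ∀ p, e p ≠ 0 := fun p h =>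
    p.2.2 ((Equiv.symm_apply_eq _).1 (h : Finsupp.equivFunOnFinite.symm p.1 = 0))
  have hJ (a : Fin nv →₀ ℕ) : IsLowerSet {p | e p ≤ a} := fun p q hqp hp i => (hqp i).trans (hp i)
  have hgreatest (a : Fin nv →₀ ℕ) (hne : {p | e p ≤ a}.Nonempty) :
      ∃ t, IsGreatest {p | e p ≤ a} t := exists_isGreatest_lcmBar_le K a hne
  have hπ (i : ℕ) (p q : lcmBar K nv I) (z) (hz : z ∈ σ.S i q) :
      projTop K _ p i z = if q = p then z else 0 :=
    projTop_of_mem_supported K p q (σ.graded i q hz)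
  have hsmul (i : ℕ) (p : lcmBar K nv I) (f g : PolyS K nv) (z : σ.S i p) :
      DirectSum.lof (PolyS K nv) _ (fun p => PolyS K nv ⊗[K] σ.S i p) p ((f * g) ⊗ₜ z) =
        f • DirectSum.lof (PolyS K nv) _ (fun p => PolyS K nv ⊗[K] σ.S i p) p (g ⊗ₜ z) := by
    rw [← map_smul, TensorProduct.smul_tmul', smul_eq_mul]
  -- The differentials as finite sums over the graded pieces of the boundary.
  have hδ_sum (i : ℕ) (p : lcmBar K nv I) (z : σ.S (i + 1) p) :
      ∃ (T : Finset (lcmBar K nv I)) (ζ : ∀ q, σ.S i q), (∀ q ∈ T, q < p) ∧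
        ∑ q ∈ T, (ζ q : CGrp K (lcmBar K nv I) (i + 1)) = cbdry K _ (i + 1) z ∧
        ∀ f : PolyS K nv, δ i (DirectSum.lof (PolyS K nv) _ _ p (f ⊗ₜ z)) =
          ∑ q ∈ T, DirectSum.lof (PolyS K nv) _ (fun p => PolyS K nv ⊗[K] σ.S i p) q
            ((f * MvPolynomial.monomial (e p - e q) (1 : K)) ⊗ₜ ζ q) := by
    set y := cbdry K _ (i + 1) (z : CGrp K (lcmBar K nv I) (i + 2))
    have hlt (c) (hc : y c ≠ 0) : c.1 0 < p :=
      (Finsupp.mem_supported K y).1 (σ.iSup_le_supported K i _ (σ.strict i p z z.2))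
        (Finsupp.mem_support_iff.2 hc)
    have hTlt : ∀ q ∈ y.support.image fun c => c.1 0, q < p := by
      simp only [Finset.mem_image, Finsupp.mem_support_iff]
      rintro _ ⟨c, hc, rfl⟩
      exact hlt c hc
    have hmem (c) (hc : y c ≠ 0) : c.1 0 ∈ y.support.image fun c => c.1 0 :=
      Finset.mem_image_of_mem (fun c : OChain (lcmBar K nv I) (i + 1) => c.1 0)
        (Finsupp.mem_support_iff.2 hc)
    refine ⟨y.support.image fun c => c.1 0, fun q => ⟨projTop K _ q i y, hproj i p z z.2 q⟩,
      hTlt, sum_projTop K y _ hmem, fun f => ?_⟩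
    have hf : DirectSum.lof (PolyS K nv) _ (fun p => PolyS K nv ⊗[K] σ.S (i + 1) p) p (f ⊗ₜ z) =
        f • DirectSum.lof (PolyS K nv) _ _ p (1 ⊗ₜ z) := by rw [← hsmul, mul_one]
    rw [hf, map_smul, hδ i p z z.2,
      finsum_mem_eq_sum_of_subset (t := y.support.image fun c => c.1 0), Finset.smul_sum]
    · refine Finset.sum_congr rfl fun q _ => ?_
      have hpq : e p - e q = Finsupp.equivFunOnFinite.symm (p.1 - q.1) :=
        Finsupp.ext fun _ => rfl
      rw [hsmul, hpq]
    · rintro q ⟨-, hq⟩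
      by_contra hqT
      have h0 : projTop K _ q i y = 0 :=
        projTop_eq_zero K fun c hc hcq => hqT (hcq ▸ hmem c hc)
      have h0' : (⟨_, hproj i p z z.2 q⟩ : σ.S i q) = 0 := Subtype.ext h0
      exact hq (by beta_reduce; rw [h0', TensorProduct.tmul_zero, map_zero])
    · exact fun q hq => hTlt q hq
  have hδ0_tmul (p : lcmBar K nv I) (f : PolyS K nv) (z : σ.S 0 p) :
      δ0 (DirectSum.lof (PolyS K nv) _ _ p (f ⊗ₜ z)) =
        (cbdry K _ 0 (z : CGrp K (lcmBar K nv I) 1)) (emptyOC _) •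
          (f * MvPolynomial.monomial (e p) (1 : K)) := by
    rw [← mul_one f, hsmul, map_smul, hδ0 p z z.2, smul_comm, smul_eq_mul, mul_one]
  have hcomm (i : ℕ) (a : Fin nv →₀ ℕ) (w) : multidegreePart K e (σ.S i) a (δ i w) =
      cbdry K _ (i + 1) (multidegreePart K e (σ.S (i + 1)) a w) := by
    induction w using directSum_tensor_induction with
    | zero => simp
    | add x y hx hy => simp only [map_add, hx, hy]
    | lof p d c z =>
      obtain ⟨T, ζ, hTp, hTsum, hT⟩ := hδ_sum i p z
      have hpart (q) (hq : q ∈ T) : multidegreePart K e (σ.S i) a (DirectSum.lof (PolyS K nv) _ _ q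
          ((MvPolynomial.monomial d c * MvPolynomial.monomial (e p - e q) (1 : K)) ⊗ₜ ζ q)) =
          if e p + d = a then c • (ζ q : CGrp K (lcmBar K nv I) (i + 1)) else 0 := by
        have hle : e q ≤ e p := (hTp q hq).le
        rw [MvPolynomial.monomial_mul, mul_one, multidegreePart_lof_monomial, add_left_comm,
          add_tsub_cancel_of_le hle, add_comm d]
      rw [hT, map_sum, Finset.sum_congr rfl hpart, multidegreePart_lof_monomial]
      split_ifs
      · rw [map_smul, ← hTsum, Finset.smul_sum]
      · rw [map_zero, Finset.sum_const_zero]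
  let ε : CGrp K (lcmBar K nv I) 1 →ₗ[K] K := Finsupp.lapply (emptyOC _) ∘ₗ cbdry K _ 0
  have hcomm0 (a : Fin nv →₀ ℕ) (w) :
      MvPolynomial.coeff a (δ0 w) = ε (multidegreePart K e (σ.S 0) a w) := by
    induction w using directSum_tensor_induction with
    | zero => simp
    | add x y hx hy => simp only [map_add, MvPolynomial.coeff_add, hx, hy]
    | lof p d c z =>
      rw [hδ0_tmul, multidegreePart_lof, shiftedCoeff_tmul, map_smul, MvPolynomial.coeff_smul,
        mul_comm, smul_eq_mul, smul_eq_mul, mul_comm]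
      rfl
  have hrange : LinearMap.range δ0 = I := by
    apply le_antisymm
    · rintro _ ⟨w, rfl⟩
      induction w using directSum_tensor_induction with
      | zero => simp
      | add x y hx hy => rw [map_add]; exact add_mem hx hy
      | lof p d c z =>
        rw [hδ0_tmul, ← mul_smul_comm]
        refine I.mul_mem_left _ ?_
        rw [MvPolynomial.smul_eq_C_mul]
        exact I.mul_mem_left _ (monOf_mem_of_mem_lcmBar K p.2)
    · obtain ⟨G, rfl⟩ := hI
      refine Ideal.span_le.2 ?_
      rintro _ ⟨g, hg, rfl⟩
      obtain ⟨p, hp, hpg⟩ := exists_minGens_le K (d := g)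
        (Ideal.subset_span (Set.mem_image_of_mem (monOf K nv) hg))
      obtain ⟨t, ht⟩ := hgreatest (Finsupp.equivFunOnFinite.symm g)
        ⟨⟨p, minGens_subset_lcmBar K hItop hp⟩, hpg⟩
      obtain ⟨b, hb, hbz⟩ := σ.exists_cbdry_eq K (hJ _) ht (n := 0)
        (z := Finsupp.single (emptyOC _) 1) trivial trivial
      obtain ⟨u, hu⟩ := exists_multidegreePart_eq K e (σ.S 0) hb
      refine ⟨u, ?_⟩
      ext a
      rw [hcomm0, hu, monOf, MvPolynomial.coeff_monomial, apply_ite ε, map_zero]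
      simp [ε, hbz]
  refine ⟨fun i => ?_, ?_, hrange, ?_, fun i => ?_⟩
  · refine range_eq_ker_of_multidegreePart K e _ _ (fun p => projTop K _ p (i + 1))
      (hπ (i + 1)) (fun a => multidegreePart K e (σ.S i) a) (fun x => ⟨?_, ?_⟩) _ _ _ _
      (hcomm (i + 1)) (hcomm i) (cbdry_cbdry K (i + 1)) fun a =>
        σ.exists_cbdry_succ_eq K (hJ a) (hgreatest a) (i + 1)
    · rintro rfl a
      exact map_zero _
    · exact eq_zero_of_multidegreePart_eq_zero K e _ (fun p => projTop K _ p i) (hπ i)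
  · refine range_eq_ker_of_multidegreePart K e _ _ (fun p => projTop K _ p 0)
      (hπ 0) (fun a f => MvPolynomial.coeff a f) (fun f => MvPolynomial.eq_zero_iff) _ _ _ ε
      (hcomm 0) hcomm0 (fun v => by simp [ε, cbdry_cbdry]) fun a b hb hb0 =>
        σ.exists_cbdry_succ_eq K (hJ a) (hgreatest a) 0 b hb ?_
    ext c
    rw [eq_emptyOC c]
    exact hb0
  · rintro _ ⟨w, rfl⟩
    induction w using directSum_tensor_induction with
    | zero => simp
    | add x y hx hy => rw [map_add]; exact add_mem hx hy
    | lof p d c z =>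
      rw [hδ0_tmul, ← smul_mul_assoc, mul_comm, ← smul_eq_mul]
      exact Submodule.smul_mem_smul (monomial_mem_span_range_X K (he p)) trivial
  · rintro _ ⟨w, rfl⟩
    induction w using directSum_tensor_induction with
    | zero => simp
    | add x y hx hy => rw [map_add]; exact add_mem hx hy
    | lof p d c z =>
      obtain ⟨T, ζ, hTp, -, hT⟩ := hδ_sum i p z
      rw [hT]
      refine Submodule.sum_mem _ fun q hq => ?_
      rw [mul_comm, hsmul]
      refine Submodule.smul_mem_smul (monomial_mem_span_range_X K fun h => ?_) trivial
      exact (hTp q hq).not_ge fun j => tsub_eq_zero_iff_le.1 (DFunLike.congr_fun h j)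

end
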